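/- Let S be a finite join-semilattice with a greatest element ⊤, and suppose S has at least one non-generator. Then there exists an element Φ ∈ S which is simultaneously a greatest lower bound of the set of elements maximal below ⊤ and a least upper bound of the set of all non-generators of S. -/

import Mathlib

def NonGenerator {S : Type*} [PartialOrder S] [OrderTop S] (a : S) : Prop :=
  ∀ e : S, (¬ ∃ p : S, p < ⊤ ∧ a ≤ p ∧ e ≤ p) → e = ⊤

def MaximalBelowTop {S : Type*} [PartialOrder S] [OrderTop S] (p : S) : Prop :=
  p < ⊤ ∧ ¬ ∃ q : S, p < q ∧ q < ⊤

/-!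
A non-generator `a` lies below every coatom `p`, since otherwise `a ∨ p = ⊤` with `p ≠ ⊤`.
Conversely, a lower bound of the coatoms joins no `e ≠ ⊤` to `⊤`, as a coatom above `e` is above
both. So in a coatomic order the non-generators are exactly the lower bounds of the coatoms. These
are closed under joins, hence if there are any, the ascending chain condition yields a greatest one.
-/

section NonGenerator

variable {S : Type*} [PartialOrder S] [OrderTop S] {a p : S}

theorem maximalBelowTop_iff_isCoatom : MaximalBelowTop p ↔ IsCoatom p := by
  simp only [← covBy_top_iff, MaximalBelowTop, CovBy, not_exists, not_and]

theorem NonGenerator.le_of_isCoatom (ha : NonGenerator a) (hp : IsCoatom p) : a ≤ p := by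
  by_contra hap
  refine hp.ne_top (ha p ?_)
  rintro ⟨q, hq, haq, hpq⟩
  have hqp : q = p := (hp.le_iff_eq hq.ne).mp hpq
  exact hap (hqp ▸ haq)

theorem nonGenerator_iff_forall_isCoatom_le [IsCoatomic S] :
    NonGenerator a ↔ ∀ p, IsCoatom p → a ≤ p := by
  refine ⟨fun ha _ hp ↦ ha.le_of_isCoatom hp, fun ha e he ↦ ?_⟩
  refine (eq_top_or_exists_le_coatom e).resolve_right ?_
  rintro ⟨p, hp, hep⟩
  exact he ⟨p, hp.lt_top, ha p hp, hep⟩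

theorem setOf_nonGenerator_eq_lowerBounds [IsCoatomic S] :
    {a : S | NonGenerator a} = lowerBounds {p : S | MaximalBelowTop p} := by
  ext a
  simp only [mem_lowerBounds, Set.mem_ofPred_eq, maximalBelowTop_iff_isCoatom,
    nonGenerator_iff_forall_isCoatom_le]

theorem isLUB_nonGenerator_iff_isGLB_maximalBelowTop [IsCoatomic S] :
    IsLUB {x : S | NonGenerator x} a ↔ IsGLB {p : S | MaximalBelowTop p} a := by
  rw [setOf_nonGenerator_eq_lowerBounds, isLUB_lowerBounds]

end NonGenerator

section WellFoundedGT

variable {α : Type*} {s : Set α}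

theorem exists_isGreatest_of_directedOn [Preorder α] [WellFoundedGT α] (hs : s.Nonempty)
    (hd : DirectedOn (· ≤ ·) s) : ∃ m, IsGreatest s m := by
  obtain ⟨m, hm⟩ := WellFoundedGT.exists_maximal inferInstance s hs
  exact ⟨m, hm.prop, hd.is_top_of_is_max hm.prop fun _ hx hmx ↦ hm.le_of_ge hx hmx⟩

theorem supClosed_lowerBounds [SemilatticeSup α] : SupClosed (lowerBounds s) :=
  fun _ ha _ hb _ hx ↦ sup_le (ha hx) (hb hx)

theorem exists_isGLB_of_bddBelow [SemilatticeSup α] [WellFoundedGT α] (hs : BddBelow s) :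
    ∃ m, IsGLB s m :=
  exists_isGreatest_of_directedOn hs supClosed_lowerBounds.directedOn

end WellFoundedGT

theorem stmt_14_general {S : Type*} [SemilatticeSup S] [OrderTop S] [WellFoundedGT S]
    (hne : ∃ a : S, NonGenerator a) :
    ∃ Φ : S, IsGLB {p : S | MaximalBelowTop p} Φ ∧
      IsLUB {x : S | NonGenerator x} Φ := by
  have hbdd : BddBelow {p : S | MaximalBelowTop p} := by
    rwa [BddBelow, ← setOf_nonGenerator_eq_lowerBounds]
  obtain ⟨Φ, hΦ⟩ := exists_isGLB_of_bddBelow hbdd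
  exact ⟨Φ, hΦ, isLUB_nonGenerator_iff_isGLB_maximalBelowTop.mpr hΦ⟩

theorem stmt_14 {S : Type*} [SemilatticeSup S] [OrderTop S] [Finite S]
    (hne : ∃ a : S, NonGenerator a) :
    ∃ Φ : S, IsGLB {p : S | MaximalBelowTop p} Φ ∧
      IsLUB {x : S | NonGenerator x} Φ :=
  stmt_14_general hne
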